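/- The matrix A = P⊥ − M_W D_θ M_W, where θ solves Σ_j (M_W)_ij² θ_j = (P⊥)_ii for all i, satisfies the exact identity Σ_{i,j} A_ij² = K_Z − Σ_k (P⊥)_kk θ_k, where K_Z = tr(P⊥) is the rank of P⊥. If in addition 0 ≤ θ_k ≤ δ for all k for some δ < 1, then (1 − δ) K_Z ≤ Σ_{i,j} A_ij² ≤ K_Z. -/

import Mathlib

open Matrix Finset

/-- The residual-maker (annihilator) projection `M_W = I - W (W'W)⁻¹ W'`. -/
noncomputable def annihilator {N KW : ℕ} (W : Matrix (Fin N) (Fin KW) ℝ) :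
    Matrix (Fin N) (Fin N) ℝ :=
  1 - W * (Wᵀ * W)⁻¹ * Wᵀ

theorem annih_symm {N KW : ℕ} (W : Matrix (Fin N) (Fin KW) ℝ) :
    (annihilator W)ᵀ = annihilator W := by
  simp [annihilator, Matrix.transpose_mul, Matrix.transpose_nonsing_inv, Matrix.mul_assoc]

theorem annih_idem {N KW : ℕ} (W : Matrix (Fin N) (Fin KW) ℝ) :
    annihilator W * annihilator W = annihilator W := by
  have h : (W * (Wᵀ * W)⁻¹ * Wᵀ) * (W * (Wᵀ * W)⁻¹ * Wᵀ) = W * (Wᵀ * W)⁻¹ * Wᵀ := by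
    by_cases hu : IsUnit (Wᵀ * W).det
    · have : (W * (Wᵀ * W)⁻¹ * Wᵀ) * (W * (Wᵀ * W)⁻¹ * Wᵀ)
          = W * ((Wᵀ * W)⁻¹ * (Wᵀ * W)) * (Wᵀ * W)⁻¹ * Wᵀ := by
        simp only [Matrix.mul_assoc]
      rw [this, Matrix.nonsing_inv_mul _ hu, Matrix.mul_one]
    · rw [Matrix.nonsing_inv_apply_not_isUnit _ hu]
      simp
  unfold annihilator
  rw [Matrix.sub_mul, Matrix.mul_sub, Matrix.mul_sub, h]
  simp

/-- The matrix `A = P⊥ − M_W D_θ M_W`, where `θ` solves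
`∑_j (M_W)_ij² θ_j = (P⊥)_ii` for all `i`, satisfies the exact identity
`∑_{i,j} A_ij² = K_Z − ∑_k (P⊥)_kk θ_k`, where `K_Z = tr(P⊥)` is the rank of `P⊥`.
If in addition `0 ≤ θ_k ≤ δ` for all `k` for some `δ < 1`, then
`(1 − δ) K_Z ≤ ∑_{i,j} A_ij² ≤ K_Z`. -/
theorem sum_sq_A_identity_and_bounds
    (N KW KZ : ℕ) (W : Matrix (Fin N) (Fin KW) ℝ) (hWrank : W.rank = KW)
    (Pperp : Matrix (Fin N) (Fin N) ℝ)
    (hPsymm : Pperp.IsSymm) (hPidem : Pperp * Pperp = Pperp)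
    (hPrank : Pperp.rank = KZ) (htr : Pperp.trace = (KZ : ℝ))
    (hMP : annihilator W * Pperp = Pperp) (hPM : Pperp * annihilator W = Pperp)
    (θ : Fin N → ℝ)
    (hθ : ∀ i, ∑ j, (annihilator W i j) ^ 2 * θ j = Pperp i i) :
    (∑ i, ∑ j, ((Pperp - annihilator W * Matrix.diagonal θ * annihilator W) i j) ^ 2
      = (KZ : ℝ) - ∑ k, Pperp k k * θ k) ∧
    (∀ δ : ℝ, δ < 1 → (∀ k, 0 ≤ θ k) → (∀ k, θ k ≤ δ) →
      (1 - δ) * (KZ : ℝ)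
        ≤ ∑ i, ∑ j, ((Pperp - annihilator W * Matrix.diagonal θ * annihilator W) i j) ^ 2 ∧
      ∑ i, ∑ j, ((Pperp - annihilator W * Matrix.diagonal θ * annihilator W) i j) ^ 2
        ≤ (KZ : ℝ)) := by
  have hMs : (annihilator W)ᵀ = annihilator W := annih_symm W
  have hMM := annih_idem W
  generalize annihilator W = M at *
  have key : ∑ i, ∑ j, ((Pperp - M * Matrix.diagonal θ * M) i j) ^ 2
      = (KZ : ℝ) - ∑ k, Pperp k k * θ k := by
    have hPt : Pperpᵀ = Pperp := hPsymm
    have hAs : (Pperp - M * Matrix.diagonal θ * M)ᵀ = Pperp - M * Matrix.diagonal θ * M := by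
      simp [Matrix.transpose_mul, hMs, hPt, Matrix.mul_assoc]
    have h1 : ∑ i, ∑ j, ((Pperp - M * Matrix.diagonal θ * M) i j) ^ 2
        = ((Pperp - M * Matrix.diagonal θ * M) * (Pperp - M * Matrix.diagonal θ * M)).trace := by
      conv_rhs => rw [← hAs]
      generalize Pperp - M * Matrix.diagonal θ * M = A at hAs
      rw [hAs]
      simp only [Matrix.trace, Matrix.diag, Matrix.mul_apply]
      refine Finset.sum_congr rfl fun i _ => Finset.sum_congr rfl fun j _ => ?_
      have : A j i = A i j := congrFun (congrFun hAs i) j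
      rw [this, sq]
    have e1 : (Pperp * (M * Matrix.diagonal θ * M)).trace = ∑ k, Pperp k k * θ k := by
      rw [← Matrix.mul_assoc, ← Matrix.mul_assoc, hPM, Matrix.trace_mul_comm,
        ← Matrix.mul_assoc, hMP]
      simp [Matrix.trace, Matrix.mul_diagonal]
    have e2 : ((M * Matrix.diagonal θ * M) * (M * Matrix.diagonal θ * M)).trace
        = ∑ k, Pperp k k * θ k := by
      have : (M * Matrix.diagonal θ * M) * (M * Matrix.diagonal θ * M)
          = M * Matrix.diagonal θ * (M * M) * Matrix.diagonal θ * M := by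
        simp only [Matrix.mul_assoc]
      rw [this, hMM, Matrix.trace_mul_comm]
      simp only [← Matrix.mul_assoc]
      rw [hMM]
      rw [Matrix.trace]
      refine Finset.sum_congr rfl fun i _ => ?_
      rw [Matrix.diag_apply, Matrix.mul_diagonal, ← hθ i, Matrix.mul_apply]
      congr 1
      refine Finset.sum_congr rfl fun j _ => ?_
      have : M j i = M i j := congrFun (congrFun hMs i) j
      rw [Matrix.mul_diagonal, this]
      ring
    rw [h1, Matrix.sub_mul, Matrix.mul_sub, Matrix.mul_sub, Matrix.trace_sub, Matrix.trace_sub,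
      Matrix.trace_sub, hPidem, Matrix.trace_mul_comm _ Pperp, e1, e2, htr]
    ring
  refine ⟨key, fun δ _ h0 h1 => ?_⟩
  have hP0 : ∀ i, 0 ≤ Pperp i i := fun i => by
    rw [← hθ i]
    exact Finset.sum_nonneg fun j _ => mul_nonneg (sq_nonneg _) (h0 j)
  rw [key]
  have a1 : 0 ≤ ∑ k, Pperp k k * θ k := Finset.sum_nonneg fun k _ => mul_nonneg (hP0 k) (h0 k)
  have a2 : ∑ k, Pperp k k * θ k ≤ (KZ : ℝ) * δ := by
    rw [← htr, Matrix.trace, Finset.sum_mul]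
    exact Finset.sum_le_sum fun k _ => mul_le_mul_of_nonneg_left (h1 k) (hP0 k)
  constructor <;> linarith
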